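/- arXiv:1302.5789 — 2 statements merged into one kernel-verified Lean document; each statement's English description precedes it below -/
import Mathlib

section
/- Let f be a negative definite kernel on a countable set Γ. Then √f is a measure definite kernel: there is a measure space (Ω,𝓑,μ) and measurable sets S_x with √(f(x,y)) = μ(S_x △ S_y) for all x,y ∈ Γ. -/
open MeasureTheory
open scoped symmDiff

open ProbabilityTheory

/-- A negative definite kernel is a squared distance between vectors of a real inner product
space. -/
theorem exists_norm_sub_sq_eq_of_negative_definite.{u} {Γ : Type u} (f : Γ → Γ → ℝ)
    (hdiag : ∀ x, f x x = 0) (hsymm : ∀ x y, f x y = f y x)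
    (hneg : ∀ (n : ℕ) (x : Fin n → Γ) (c : Fin n → ℝ), (∑ i, c i = 0) →
      ∑ i, ∑ j, c i * c j * f (x i) (x j) ≤ 0) (o : Γ) :
    ∃ (E : Type u) (_ : NormedAddCommGroup E) (_ : InnerProductSpace ℝ E) (v : Γ → E),
      ∀ x y, ‖v x - v y‖ ^ 2 = f x y := by
  let k : Γ → Γ → ℝ := fun x y ↦ (f x o + f y o - f x y) / 2
  let K : Matrix Γ Γ (ℝ →L[ℝ] ℝ) := .of fun x y ↦ k x y • 1
  have hK : K.PosSemidef := by
    refine ((RKHS.posSemidef_tfae (K := K)).out 0 2 rfl rfl).mpr ⟨?_, fun c ↦ ?_⟩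
    · ext x y
      simp only [Matrix.conjTranspose_apply, K, k, Matrix.of_apply, star_smul]
      rw [hsymm y x, add_comm (f y o), star_one, star_trivial]
    · let e := c.support.equivFin
      let p : Fin c.support.card → Γ := fun i ↦ (e.symm i : Γ)
      have sum_eq (g : Γ → ℝ) : ∑ x ∈ c.support, g x = ∑ i, g (p i) := by
        rw [← Finset.sum_coe_sort, ← e.symm.sum_comp]
      have h := hneg _ (Fin.cons o p : Fin (_ + 1) → Γ)
        (Fin.cons (-∑ i, c (p i)) fun i ↦ c (p i)) (by simp [Fin.sum_univ_succ])
      simp only [Fin.sum_univ_succ, Fin.cons_zero, Fin.cons_succ, hdiag, hsymm o,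
        Finset.sum_add_distrib] at h
      simp only [Finsupp.sum, sum_eq]
      have h₁ : ∑ i, -(∑ i, c (p i)) * c (p i) * f (p i) o
          = -((∑ i, c (p i)) * ∑ i, c (p i) * f (p i) o) := by
        rw [← neg_mul, Finset.mul_sum]
        exact Finset.sum_congr rfl fun i _ ↦ by ring
      have h₂ : ∑ i, c (p i) * -(∑ i, c (p i)) * f (p i) o
          = -((∑ i, c (p i)) * ∑ i, c (p i) * f (p i) o) := by
        rw [← neg_mul, Finset.mul_sum]
        exact Finset.sum_congr rfl fun i _ ↦ by ring
      have h₃ : ∑ i, ∑ j, inner ℝ (K (p j) (p i) (c (p i))) (c (p j))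
          = (∑ i, c (p i)) * (∑ i, c (p i) * f (p i) o)
            - (∑ i, ∑ j, c (p i) * c (p j) * f (p i) (p j)) / 2 := by
        have h₄ : (∑ i, c (p i)) * (∑ i, c (p i) * f (p i) o)
            = (∑ i, ∑ j, c (p i) * (c (p j) * f (p j) o)
              + ∑ i, ∑ j, c (p j) * (c (p i) * f (p i) o)) / 2 := by
          rw [Finset.sum_comm (f := fun i j ↦ c (p j) * (c (p i) * f (p i) o)),
            Finset.sum_mul_sum]
          ring
        rw [h₄, ← Finset.sum_add_distrib, ← sub_div, ← Finset.sum_sub_distrib, Finset.sum_div]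
        refine Finset.sum_congr rfl fun i _ ↦ ?_
        rw [← Finset.sum_add_distrib, ← Finset.sum_sub_distrib, Finset.sum_div]
        refine Finset.sum_congr rfl fun j _ ↦ ?_
        simp only [K, k, Matrix.of_apply, smul_apply,
          one_apply_eq_self, smul_eq_mul, RCLike.inner_apply, conj_trivial, hsymm (p j) (p i)]
        ring
      rw [h₁, h₂] at h
      simp only [RCLike.re_to_real]
      rw [h₃]
      linarith
  have : Fact K.PosSemidef := ⟨hK⟩
  have hinner (x y : Γ) : inner ℝ (RKHS.kerFun (RKHS.OfKernel K) x (1 : ℝ))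
      (RKHS.kerFun (RKHS.OfKernel K) y (1 : ℝ)) = k y x := by
    rw [← RKHS.kernel_inner, RKHS.OfKernel.kernel_ofKernel]
    simp [K]
  refine ⟨RKHS.OfKernel K, inferInstance, inferInstance,
    fun x ↦ RKHS.kerFun (RKHS.OfKernel K) x (1 : ℝ), fun x y ↦ ?_⟩
  rw [norm_sub_sq_real, ← real_inner_self_eq_norm_sq, ← real_inner_self_eq_norm_sq,
    hinner, hinner, hinner]
  simp only [k, hdiag, hsymm y x]
  ring

/-- Countably many vectors of a real inner product space have finitely supported coordinates with
respect to some orthonormal system. -/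
theorem exists_finsupp_sum_sq_eq_norm_sub_sq {E : Type*} [NormedAddCommGroup E]
    [InnerProductSpace ℝ E] (v : ℕ → E) :
    ∃ (ι : Type) (a : ℕ → ι →₀ ℝ), ∀ m n, ‖v m - v n‖ ^ 2 = (a m - a n).sum fun _ c ↦ c ^ 2 := by
  let e : {i | InnerProductSpace.gramSchmidtNormed ℝ v i ≠ 0} → E :=
    fun i ↦ InnerProductSpace.gramSchmidtNormed ℝ v i
  have he : Orthonormal ℝ e := InnerProductSpace.gramSchmidtNormed_orthonormal' v
  have hspan : Submodule.span ℝ (Set.range e) = Submodule.span ℝ (Set.range v) := by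
    rw [← InnerProductSpace.span_gramSchmidt ℝ v,
      ← InnerProductSpace.span_gramSchmidtNormed_range]
    refine le_antisymm (Submodule.span_mono ?_) (Submodule.span_le.mpr ?_)
    · rintro _ ⟨i, rfl⟩
      exact ⟨i, rfl⟩
    · rintro _ ⟨i, rfl⟩
      by_cases hi : InnerProductSpace.gramSchmidtNormed ℝ v i = 0
      · simp [hi]
      · exact Submodule.subset_span ⟨⟨i, hi⟩, rfl⟩
  have hv (n : ℕ) : ∃ a : _ →₀ ℝ, Finsupp.linearCombination ℝ e a = v n := by
    rw [← LinearMap.mem_range, Finsupp.range_linearCombination, hspan]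
    exact Submodule.subset_span ⟨n, rfl⟩
  choose a ha using hv
  refine ⟨_, a, fun m n ↦ ?_⟩
  rw [← ha m, ← ha n, ← map_sub, ← real_inner_self_eq_norm_sq, he.inner_finsupp_eq_sum_left]
  exact Finset.sum_congr rfl fun i _ ↦ (sq _).symm

/-- A finite linear combination of independent standard Gaussian variables is Gaussian. -/
theorem map_sum_mul_infinitePi_gaussianReal {ι : Type*} (s : Finset ι) (c : ι → ℝ) :
    (Measure.infinitePi fun _ : ι ↦ gaussianReal 0 1).map (fun ω ↦ ∑ i ∈ s, c i * ω i) =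
      gaussianReal 0 (∑ i ∈ s, c i ^ 2).toNNReal := by
  classical
  induction s using Finset.induction_on with
  | empty => simp
  | insert i s hi ih =>
    have hindep : iIndepFun (fun i (ω : ι → ℝ) ↦ c i * ω i)
        (Measure.infinitePi fun _ : ι ↦ gaussianReal 0 1) :=
      iIndepFun_infinitePi (X := fun i x ↦ c i * x) fun i ↦ by fun_prop
    have hX : (Measure.infinitePi fun _ : ι ↦ gaussianReal 0 1).map (fun ω ↦ c i * ω i) =
        gaussianReal 0 (c i ^ 2).toNNReal := by
      have := gaussianReal_map_const_mul (μ := 0) (v := 1) (c i)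
      rw [← Measure.infinitePi_map_eval (fun _ : ι ↦ gaussianReal 0 1) i,
        Measure.map_map (by fun_prop) (by fun_prop)] at this
      rw [Real.toNNReal_of_nonneg (sq_nonneg _)]
      simpa [Function.comp_def] using this
    have := gaussianReal_add_gaussianReal_of_indepFun
      (hindep.indepFun_finsetSum_of_notMem (fun i ↦ by fun_prop) hi).symm hX
      (by simpa [Finset.sum_fn] using ih)
    rw [Finset.sum_insert hi, Real.toNNReal_add (sq_nonneg _)
      (Finset.sum_nonneg fun i _ ↦ sq_nonneg _)]
    simpa [Finset.sum_insert hi, Pi.add_def, Finset.sum_apply] using this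

/-- The first absolute moment of a centred Gaussian is proportional to its standard deviation. -/
theorem lintegral_abs_gaussianReal {r : ℝ} (hr : 0 ≤ r) :
    ∫⁻ x, ENNReal.ofReal |x| ∂(gaussianReal 0 r.toNNReal) =
      ENNReal.ofReal √r * ∫⁻ x, ENNReal.ofReal |x| ∂(gaussianReal 0 1) := by
  have h := gaussianReal_map_const_mul (μ := 0) (v := 1) √r
  have hv : (NNReal.mk (√r ^ 2) (sq_nonneg _)) * 1 = r.toNNReal := by
    ext
    simp [Real.sq_sqrt hr, hr]
  rw [hv, mul_zero] at h
  rw [← h, lintegral_map (by fun_prop) (by fun_prop), ← lintegral_const_mul _ (by fun_prop)]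
  simp [abs_mul, ENNReal.ofReal_mul, abs_of_nonneg (Real.sqrt_nonneg r)]

/-- The first absolute moment of a standard Gaussian is finite. -/
theorem lintegral_abs_gaussianReal_ne_top :
    ∫⁻ x, ENNReal.ofReal |x| ∂(gaussianReal 0 1) ≠ ⊤ := by
  have h := (memLp_id_gaussianReal (μ := 0) (v := 1) 1).integrable le_rfl
  exact h.abs.lintegral_lt_top.ne

/-- The first absolute moment of a standard Gaussian is positive. -/
theorem lintegral_abs_gaussianReal_ne_zero :
    ∫⁻ x, ENNReal.ofReal |x| ∂(gaussianReal 0 1) ≠ 0 := by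
  rw [Ne, lintegral_eq_zero_iff (by fun_prop)]
  intro h
  have := nullSingletonClass_gaussianReal (μ := 0) one_ne_zero
  have h₁ : ∀ᵐ x ∂(gaussianReal 0 1), x ≠ 0 := by simp [ae_iff]
  obtain ⟨x, hx, hx₁⟩ := (h.and h₁).exists
  simp at hx
  exact hx₁ hx

/-- The symmetric difference of two subgraphs has measure the `L¹` distance of the functions. -/
theorem prod_volume_symmDiff_subgraph {Ω : Type*} [MeasurableSpace Ω] (P : Measure Ω) [SFinite P]
    {X Y : Ω → ℝ} (hX : Measurable X) (hY : Measurable Y) :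
    P.prod volume ({p : Ω × ℝ | p.2 < X p.1} ∆ {p : Ω × ℝ | p.2 < Y p.1}) =
      ∫⁻ ω, ENNReal.ofReal |X ω - Y ω| ∂P := by
  have hs {Z : Ω → ℝ} (hZ : Measurable Z) : MeasurableSet {p : Ω × ℝ | p.2 < Z p.1} :=
    measurableSet_lt (by fun_prop) (by fun_prop)
  rw [Measure.prod_apply ((hs hX).symmDiff (hs hY))]
  refine lintegral_congr fun ω ↦ ?_
  have : Prod.mk ω ⁻¹' ({p : Ω × ℝ | p.2 < X p.1} ∆ {p : Ω × ℝ | p.2 < Y p.1}) =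
      Set.Ico (min (X ω) (Y ω)) (max (X ω) (Y ω)) := by
    ext t
    simp only [Set.mem_preimage, Set.mem_symmDiff, Set.mem_ofPred_eq, Set.mem_Ico, min_le_iff,
      lt_max_iff]
    grind
  rw [this, Real.volume_Ico, max_sub_min_eq_abs']

/-- If `f` is a negative definite kernel on a countable set, then `√f`
is measure definite. -/
theorem sqrt_of_negative_definite_is_measure_definite {Γ : Type*} [Countable Γ]
    (f : Γ → Γ → ℝ)
    (hf0 : ∀ x y, 0 ≤ f x y)
    (hdiag : ∀ x, f x x = 0)
    (hsymm : ∀ x y, f x y = f y x)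
    (hneg : ∀ (n : ℕ) (x : Fin n → Γ) (c : Fin n → ℝ), (∑ i, c i = 0) →
      ∑ i, ∑ j, c i * c j * f (x i) (x j) ≤ 0) :
    ∃ (Ω : Type) (_ : MeasurableSpace Ω) (μ : Measure Ω) (S : Γ → Set Ω),
      (∀ x, MeasurableSet (S x)) ∧
      ∀ x y, μ (S x ∆ S y) = ENNReal.ofReal (Real.sqrt (f x y)) := by
  cases isEmpty_or_nonempty Γ with
  | inl _ => exact ⟨Unit, inferInstance, 0, fun _ ↦ ∅, isEmptyElim, isEmptyElim⟩
  | inr _ =>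
    obtain ⟨g, hg⟩ := exists_surjective_nat Γ
    obtain ⟨E, _, _, v, hv⟩ :=
      exists_norm_sub_sq_eq_of_negative_definite f hdiag hsymm hneg (g 0)
    obtain ⟨ι, b, hb⟩ := exists_finsupp_sum_sq_eq_norm_sub_sq (v ∘ g)
    obtain ⟨a, ha⟩ : ∃ a : Γ → ι →₀ ℝ, ∀ x y, (a x - a y).sum (fun _ c ↦ c ^ 2) = f x y := by
      refine ⟨b ∘ Function.surjInv hg, fun x y ↦ ?_⟩
      rw [Function.comp_apply, Function.comp_apply, ← hb]
      simp [Function.surjInv_eq hg, hv]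
    let P : Measure (ι → ℝ) := Measure.infinitePi fun _ ↦ gaussianReal 0 1
    let C : ENNReal := ∫⁻ x, ENNReal.ofReal |x| ∂(gaussianReal 0 1)
    let X : Γ → (ι → ℝ) → ℝ := fun x ω ↦ (a x).sum fun i c ↦ c * ω i
    have hX (x : Γ) : Measurable (X x) := Finset.measurable_fun_sum _ fun i _ ↦ by fun_prop
    refine ⟨(ι → ℝ) × ℝ, inferInstance, C⁻¹ • P.prod volume, fun x ↦ {p | p.2 < X x p.1},
      fun x ↦ measurableSet_lt (by fun_prop) (by fun_prop), fun x y ↦ ?_⟩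
    have hsub : (fun ω ↦ X x ω - X y ω) =
        fun ω ↦ ∑ i ∈ (a x - a y).support, (a x - a y) i * ω i := by
      ext ω
      exact (Finsupp.sum_sub_index fun i c d ↦ sub_mul c d (ω i)).symm
    have hmeas : Measurable fun ω ↦ X x ω - X y ω := (hX x).sub (hX y)
    have hlaw : P.map (fun ω ↦ X x ω - X y ω) = gaussianReal 0 (f x y).toNNReal := by
      rw [hsub, map_sum_mul_infinitePi_gaussianReal, ← ha x y]
      rfl
    rw [Measure.smul_apply, prod_volume_symmDiff_subgraph P (hX x) (hX y),
      ← lintegral_map (f := fun t ↦ ENNReal.ofReal |t|) (by fun_prop) hmeas, hlaw,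
      lintegral_abs_gaussianReal (hf0 x y), smul_eq_mul, mul_left_comm,
      ENNReal.inv_mul_cancel lintegral_abs_gaussianReal_ne_zero lintegral_abs_gaussianReal_ne_top,
      mul_one]
end

section
/- With Ω the space of half-spaces of a finite-dimensional real Hilbert space ℋ with its invariant measure μ, the quantity μ{M ∈ Ω : v_{x_1},…,v_{x_m} ∈ M and v_{y_1},…,v_{y_n} ∉ M} depends only on the configuration of the points (v_{x_1},…,v_{x_m},v_{y_1},…,v_{y_n}), i.e., only on the pairwise distances among them; in particular it is independent of the ambient dimension and is preserved under affine isometries. -/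
open MeasureTheory
open scoped RealInnerProductSpace ENNReal

/-- The space of (closed affine) half-spaces of a real inner product space. -/
def HalfSpaces (H : Type*) [NormedAddCommGroup H] [InnerProductSpace ℝ H] : Type _ :=
  {M : Set H // ∃ (ξ : H) (t : ℝ), ‖ξ‖ = 1 ∧ M = {u | t ≤ ⟪u, ξ⟫}}

/-- `μ` is the natural measure on the space of half-spaces: the σ-algebra is generated by
the sets `S_v = {M : v ∈ M}`, `μ` is invariant under rigid motions, and it is normalized
so that `μ {M : v ∈ M, w ∉ M} = ‖v - w‖`. -/
def IsHalfSpaceMeasure (H : Type*) [NormedAddCommGroup H] [InnerProductSpace ℝ H]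
    [m : MeasurableSpace (HalfSpaces H)] (μ : Measure (HalfSpaces H)) : Prop :=
  m = MeasurableSpace.generateFrom {A | ∃ v : H, A = {M : HalfSpaces H | v ∈ M.1}} ∧
  (∀ (φ : H ≃ᵢ H) (A : Set (HalfSpaces H)), MeasurableSet A →
    μ {M : HalfSpaces H | ⇑φ '' M.1 ∈ Subtype.val '' A} = μ A) ∧
  (∀ v w : H, μ {M : HalfSpaces H | v ∈ M.1 ∧ w ∉ M.1} = ENNReal.ofReal ‖v - w‖)

open ProbabilityTheory

section RotationInvariant

variable {H : Type*} [NormedAddCommGroup H] [InnerProductSpace ℝ H] [FiniteDimensional ℝ H]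
  [MeasurableSpace H] [BorelSpace H]

lemma charFun_eq_of_norm_eq {σ : Measure H} (hσ : ∀ R : H ≃ₗᵢ[ℝ] H, σ.map R = σ) {x y : H}
    (hxy : ‖x‖ = ‖y‖) : charFun σ x = charFun σ y := by
  set R : H ≃ₗᵢ[ℝ] H := (ℝ ∙ (x - y))ᗮ.reflection
  have hRx : R x = y := Submodule.reflection_sub hxy
  have key : charFun (σ.map R) y = charFun σ x := by
    rw [charFun_apply, charFun_apply,
      integral_map R.continuous.measurable.aemeasurable
        (Measurable.aestronglyMeasurable (by fun_prop))]
    simp_rw [← hRx, R.inner_map_map]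
  rw [← key, hσ]

/-- Rotation-invariant finite measures carried by the unit sphere are proportional. -/
lemma smul_eq_smul_of_rotation_invariant {σ τ : Measure H} [IsFiniteMeasure σ] [IsFiniteMeasure τ]
    (hσ : ∀ R : H ≃ₗᵢ[ℝ] H, σ.map R = σ) (hτ : ∀ R : H ≃ₗᵢ[ℝ] H, τ.map R = τ)
    (hσ1 : ∀ᵐ ξ ∂σ, ‖ξ‖ = 1) (hτ1 : ∀ᵐ ξ ∂τ, ‖ξ‖ = 1) :
    τ Set.univ • σ = σ Set.univ • τ := by
  have key : ∀ (σ τ : Measure H) [IsFiniteMeasure σ] [IsFiniteMeasure τ],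
      (∀ R : H ≃ₗᵢ[ℝ] H, σ.map R = σ) → (∀ᵐ ξ ∂τ, ‖ξ‖ = 1) → ∀ x : H,
      ∫ η, ∫ ξ, Complex.exp (⟪ξ, ‖x‖ • η⟫ * Complex.I) ∂σ ∂τ
        = τ.real Set.univ • charFun σ x := by
    intro σ τ _ _ hσ hτ1 x
    have : ∀ᵐ η ∂τ, ∫ ξ, Complex.exp (⟪ξ, ‖x‖ • η⟫ * Complex.I) ∂σ = charFun σ x := by
      filter_upwards [hτ1] with η hη
      rw [← charFun_apply]
      exact charFun_eq_of_norm_eq hσ (by simp [norm_smul, hη])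
    rw [integral_congr_ae this, integral_const]
  have : IsFiniteMeasure (τ Set.univ • σ) := σ.smul_finite (measure_ne_top τ _)
  have : IsFiniteMeasure (σ Set.univ • τ) := τ.smul_finite (measure_ne_top σ _)
  refine Measure.ext_of_charFun (funext fun x => ?_)
  have e1 : charFun (τ Set.univ • σ) x = τ.real Set.univ • charFun σ x := by
    simp [charFun_apply, integral_smul_measure, Measure.real]
  have e2 : charFun (σ Set.univ • τ) x = σ.real Set.univ • charFun τ x := by
    simp [charFun_apply, integral_smul_measure, Measure.real]
  rw [e1, e2, ← key σ τ hσ hτ1 x, ← key τ σ hτ hσ1 x, integral_integral_swap]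
  · refine integral_congr_ae (.of_forall fun ξ => integral_congr_ae (.of_forall fun η => ?_))
    simp only [real_inner_smul_right, real_inner_comm]
  · refine Integrable.of_bound (C := 1) (Measurable.aestronglyMeasurable ?_)
      (.of_forall fun p => ?_)
    · have : Continuous fun p : H × H =>
          Complex.exp (⟪p.2, ‖x‖ • p.1⟫ * Complex.I) := by fun_prop
      exact this.measurable
    · simp [Function.uncurry, Complex.norm_exp_ofReal_mul_I]

variable (H) in
/-- The angular part of the standard Gaussian measure, weighted by the radius. -/
noncomputable def gaussianAngular : Measure H :=
  ((stdGaussian H).withDensity fun x => ENNReal.ofReal ‖x‖).map fun x => ‖x‖⁻¹ • x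

lemma measurable_normalize : Measurable fun x : H => ‖x‖⁻¹ • x :=
  measurable_norm.inv.smul measurable_id

lemma lintegral_gaussianAngular {f : H → ℝ≥0∞} (hf : Measurable f) :
    ∫⁻ x, f x ∂(gaussianAngular H)
      = ∫⁻ x, ENNReal.ofReal ‖x‖ * f (‖x‖⁻¹ • x) ∂(stdGaussian H) := by
  rw [gaussianAngular, lintegral_map hf measurable_normalize]
  exact lintegral_withDensity_eq_lintegral_mul _ (by fun_prop) (hf.comp measurable_normalize)

instance : IsFiniteMeasure (gaussianAngular H) := by
  refine ⟨?_⟩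
  have h := lintegral_gaussianAngular (H := H) (f := fun _ => 1) measurable_const
  simp only [lintegral_const, one_mul, mul_one] at h
  rw [h]
  have : Integrable (fun x : H => x) (stdGaussian H) := IsGaussian.integrable_id
  simpa [HasFiniteIntegral, ofReal_norm] using this.hasFiniteIntegral

lemma gaussianAngular_map (R : H ≃ₗᵢ[ℝ] H) : (gaussianAngular H).map R = gaussianAngular H := by
  have hR : Measurable R := R.continuous.measurable
  refine Measure.ext_of_lintegral _ fun f hf => ?_
  rw [lintegral_map hf hR, lintegral_gaussianAngular (f := fun x => f (R x)) (hf.comp hR),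
    lintegral_gaussianAngular hf]
  conv_rhs => rw [← stdGaussian_map R]
  rw [lintegral_map (by
    exact measurable_norm.ennreal_ofReal.mul (hf.comp measurable_normalize)) hR]
  simp

lemma norm_eq_one_gaussianAngular : ∀ᵐ ξ ∂(gaussianAngular H), ‖ξ‖ = 1 := by
  rw [gaussianAngular, ae_map_iff measurable_normalize.aemeasurable
    (measurableSet_eq_fun measurable_norm measurable_const),
    ae_withDensity_iff (by fun_prop)]
  refine .of_forall fun x hx => ?_
  have : ‖x‖ ≠ 0 := by
    rintro h
    simp [h] at hx
  simp [norm_smul, this]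

/-- A positively homogeneous function has proportional integrals against the standard Gaussian
and against any rotation-invariant finite measure on the unit sphere. -/
lemma mul_lintegral_stdGaussian {σ : Measure H} [IsFiniteMeasure σ]
    (hσ : ∀ R : H ≃ₗᵢ[ℝ] H, σ.map R = σ) (hσ1 : ∀ᵐ ξ ∂σ, ‖ξ‖ = 1)
    {f : H → ℝ≥0∞} (hf : Measurable f)
    (hhom : ∀ x, f x = ENNReal.ofReal ‖x‖ * f (‖x‖⁻¹ • x)) :
    σ Set.univ * ∫⁻ x, f x ∂(stdGaussian H)
      = gaussianAngular H Set.univ * ∫⁻ x, f x ∂σ := by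
  have h := congrArg (fun ν : Measure H => ∫⁻ x, f x ∂ν)
    (smul_eq_smul_of_rotation_invariant hσ gaussianAngular_map hσ1 norm_eq_one_gaussianAngular)
  simp only [lintegral_smul_measure, smul_eq_mul] at h
  rw [h, lintegral_gaussianAngular hf]
  simp_rw [← hhom]

lemma charFun_stdGaussian_map_inner {ι : Type*} [Fintype ι] (w : ι → H)
    (s : EuclideanSpace ℝ ι) :
    charFun ((stdGaussian H).map fun x => (WithLp.toLp 2 fun i => ⟪w i, x⟫ : EuclideanSpace ℝ ι)) s
      = Complex.exp (-((∑ i, ∑ j, s i * (s j * ⟪w i, w j⟫) : ℝ) : ℂ) / 2) := by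
  rw [charFun_apply, integral_map (Measurable.aemeasurable (by fun_prop))
    (Measurable.aestronglyMeasurable (by fun_prop))]
  have e : ∀ x : H, ⟪(WithLp.toLp 2 fun i => ⟪w i, x⟫ : EuclideanSpace ℝ ι), s⟫
      = ⟪x, ∑ i, s i • w i⟫ := by
    intro x
    simp [PiLp.inner_apply, inner_sum, real_inner_smul_right, real_inner_comm]
  simp_rw [e]
  rw [← charFun_apply, charFun_stdGaussian, ← Complex.ofReal_pow, ← real_inner_self_eq_norm_sq]
  simp_rw [sum_inner, inner_sum, real_inner_smul_left, real_inner_smul_right]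

/-- The law of finitely many linear functionals under the standard Gaussian depends only on their
Gram matrix. -/
lemma stdGaussian_map_inner_eq {H' : Type*} [NormedAddCommGroup H'] [InnerProductSpace ℝ H']
    [FiniteDimensional ℝ H'] [MeasurableSpace H'] [BorelSpace H'] {ι : Type*} [Fintype ι]
    (u : ι → H) (u' : ι → H') (h : ∀ i j, ⟪u i, u j⟫ = ⟪u' i, u' j⟫) :
    (stdGaussian H).map (fun x => (WithLp.toLp 2 fun i => ⟪u i, x⟫ : EuclideanSpace ℝ ι))
      = (stdGaussian H').map (fun x => (WithLp.toLp 2 fun i => ⟪u' i, x⟫ : EuclideanSpace ℝ ι)) := by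
  refine Measure.ext_of_charFun (funext fun s => ?_)
  rw [charFun_stdGaussian_map_inner, charFun_stdGaussian_map_inner]
  simp_rw [h]

end RotationInvariant

/-- The length of the interval of all `s` that lie strictly above every `y j` and not above any
`x i`. -/
noncomputable def gapLength {m n : ℕ} (x : Fin m → ℝ) (y : Fin n → ℝ) : ℝ≥0∞ :=
  volume {s : ℝ | (∀ i, s ≤ x i) ∧ ∀ j, y j < s}

section GapLength

variable {m n : ℕ}

lemma measurable_gapLength :
    Measurable fun p : (Fin m → ℝ) × (Fin n → ℝ) => gapLength p.1 p.2 := by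
  have h : MeasurableSet {q : ((Fin m → ℝ) × (Fin n → ℝ)) × ℝ |
      (∀ i, q.2 ≤ q.1.1 i) ∧ ∀ j, q.1.2 j < q.2} := by
    measurability
  exact measurable_measure_prodMk_left h

lemma gapLength_sub_const (x : Fin m → ℝ) (y : Fin n → ℝ) (c : ℝ) :
    gapLength (fun i => x i - c) (fun j => y j - c) = gapLength x y := by
  rw [gapLength, gapLength,
    ← measure_preimage_add_right volume c {s : ℝ | (∀ i, s ≤ x i) ∧ ∀ j, y j < s}]
  congr 1
  ext s
  simp [le_sub_iff_add_le, sub_lt_iff_lt_add]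

lemma gapLength_mul (x : Fin m → ℝ) (y : Fin n → ℝ) {r : ℝ} (hr : 0 < r) :
    gapLength (fun i => r * x i) (fun j => r * y j) = ENNReal.ofReal r * gapLength x y := by
  have h := Real.volume_preimage_mul_left (inv_ne_zero hr.ne')
    {s : ℝ | (∀ i, s ≤ x i) ∧ ∀ j, y j < s}
  rw [inv_inv, abs_of_pos hr] at h
  rw [gapLength, gapLength, ← h]
  congr 1
  ext s
  simp [inv_mul_le_iff₀ hr, lt_inv_mul_iff₀ hr]

lemma gapLength_zero (hm : 1 ≤ m) (hn : 1 ≤ n) :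
    gapLength (fun _ : Fin m => 0) (fun _ : Fin n => 0) = 0 := by
  rw [gapLength]
  convert measure_empty (μ := (volume : Measure ℝ))
  ext s
  simp only [Set.mem_ofPred_eq, Set.mem_empty_iff_false, iff_false, not_and]
  intro h h'
  exact (h ⟨0, hm⟩).not_gt (h' ⟨0, hn⟩)

variable {H : Type*} [NormedAddCommGroup H] [InnerProductSpace ℝ H]

lemma gapLength_inner_eq_norm_mul (hm : 1 ≤ m) (hn : 1 ≤ n) (a : Fin m → H) (b : Fin n → H)
    (x : H) :
    gapLength (fun i => ⟪a i, x⟫) (fun j => ⟪b j, x⟫)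
      = ENNReal.ofReal ‖x‖ *
        gapLength (fun i => ⟪a i, ‖x‖⁻¹ • x⟫) (fun j => ⟪b j, ‖x‖⁻¹ • x⟫) := by
  rcases eq_or_ne x 0 with rfl | hx
  · simp [gapLength_zero hm hn]
  · have hx' : ‖x‖ ≠ 0 := norm_ne_zero_iff.2 hx
    rw [← gapLength_mul _ _ (norm_pos_iff.2 hx)]
    simp [real_inner_smul_right, hx']

lemma measurable_gapLength_inner [FiniteDimensional ℝ H] [MeasurableSpace H] [BorelSpace H]
    (a : Fin m → H) (b : Fin n → H) :
    Measurable fun x => gapLength (fun i => ⟪a i, x⟫) (fun j => ⟪b j, x⟫) :=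
  measurable_gapLength.comp (f := fun x => (fun i => ⟪a i, x⟫, fun j => ⟪b j, x⟫)) (by fun_prop)

end GapLength

lemma lintegral_comp_add_mul {g : ℝ → ℝ≥0∞} (hg : Measurable g) (t : ℝ) {c : ℝ} (hc : c ≠ 0) :
    ∫⁻ s, ENNReal.ofReal |c| * g (t + s * c) = ∫⁻ s, g s := by
  rw [lintegral_const_mul _ (by fun_prop)]
  have h := congrArg (fun ν : Measure ℝ => ∫⁻ s, g (t + s) ∂ν) (Real.smul_map_volume_mul_right hc)
  simp only [lintegral_smul_measure, smul_eq_mul] at h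
  rw [lintegral_map (by fun_prop) (by fun_prop)] at h
  rw [h, lintegral_add_left_eq_self]

section MotionInvariant

variable {H : Type*} [NormedAddCommGroup H] [InnerProductSpace ℝ H] [MeasurableSpace H]

/-- The defining properties of the invariant measure on half-spaces, expressed in the coordinates
`(ξ, t)` of the half-space `{u | t ≤ ⟪u, ξ⟫}`. -/
structure IsMotionInvariant (ρ : Measure (H × ℝ)) : Prop where
  norm_eq_one : ∀ᵐ p ∂ρ, ‖p.1‖ = 1
  map_translate : ∀ x : H, ρ.map (fun p => (p.1, p.2 + ⟪x, p.1⟫)) = ρ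
  map_rotate : ∀ R : H ≃ₗᵢ[ℝ] H, ρ.map (fun p => (R p.1, p.2)) = ρ
  separating : ∀ v w : H, ρ {p | p.2 ≤ ⟪v, p.1⟫ ∧ ⟪w, p.1⟫ < p.2} = ENNReal.ofReal ‖v - w‖

namespace IsMotionInvariant

variable {ρ : Measure (H × ℝ)}

/-- The angular part of a motion-invariant measure. -/
noncomputable def angular (ρ : Measure (H × ℝ)) : Measure H :=
  (ρ.restrict (Prod.snd ⁻¹' Set.Ioc 0 1)).map Prod.fst

section

variable [BorelSpace H]

lemma norm_eq_one_angular (hρ : IsMotionInvariant ρ) : ∀ᵐ ξ ∂(angular ρ), ‖ξ‖ = 1 := by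
  rw [angular, ae_map_iff measurable_fst.aemeasurable
    (measurableSet_eq_fun measurable_norm measurable_const)]
  exact ae_restrict_of_ae hρ.norm_eq_one

lemma angular_map (hρ : IsMotionInvariant ρ) (R : H ≃ₗᵢ[ℝ] H) :
    (angular ρ).map R = angular ρ := by
  have hR : Measurable R := R.continuous.measurable
  ext s hs
  rw [Measure.map_apply hR hs, angular, Measure.map_apply measurable_fst (hR hs),
    Measure.map_apply measurable_fst hs,
    Measure.restrict_apply (measurable_fst (hR hs)), Measure.restrict_apply (measurable_fst hs)]
  conv_rhs => rw [← hρ.map_rotate R]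
  rw [Measure.map_apply (by fun_prop)
    ((measurable_fst hs).inter (measurable_snd measurableSet_Ioc))]
  rfl

end

variable [FiniteDimensional ℝ H]

lemma measure_bounded_lt_top (hρ : IsMotionInvariant ρ) (N : ℝ) : ρ {p | |p.2| < N} < ∞ := by
  set e := stdOrthonormalBasis ℝ H
  set d := Module.finrank ℝ H
  set c : ℝ := (d + 1) * N
  have hsub : {p : H × ℝ | |p.2| < N} ≤ᵐ[ρ]
      ⋃ k, ({p | p.2 ≤ ⟪c • e k, p.1⟫ ∧ ⟪-(c • e k), p.1⟫ < p.2} ∪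
        {p | p.2 ≤ ⟪-(c • e k), p.1⟫ ∧ ⟪c • e k, p.1⟫ < p.2} : Set (H × ℝ)) := by
    filter_upwards [hρ.norm_eq_one] with p hp (hN : |p.2| < N)
    have hN0 : 0 < N := (abs_nonneg _).trans_lt hN
    obtain ⟨k, hk⟩ : ∃ k, N ≤ |⟪c • e k, p.1⟫| := by
      by_contra! hcon
      have hsum := e.sum_sq_inner_right p.1
      have hle : ∑ k, c ^ 2 * ⟪e k, p.1⟫ ^ 2 ≤ ∑ k : Fin d, N ^ 2 := by
        refine Finset.sum_le_sum fun k _ => ?_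
        have := hcon k
        rw [real_inner_smul_left] at this
        rw [← mul_pow]
        exact sq_le_sq' (abs_lt.1 this).1.le (abs_lt.1 this).2.le
      rw [← Finset.mul_sum, hsum, hp] at hle
      simp only [Finset.sum_const, Finset.card_univ, Fintype.card_fin, nsmul_eq_mul] at hle
      have : (0 : ℝ) ≤ d := Nat.cast_nonneg d
      have h2 : 0 < N ^ 2 := by positivity
      simp only [c] at hle
      nlinarith
    refine Set.mem_iUnion.2 ⟨k, ?_⟩
    have h1 := abs_lt.1 hN
    rw [Set.mem_union]
    simp only [Set.mem_ofPred_eq, inner_neg_left]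
    rcases le_abs.1 hk with h | h
    · left; constructor <;> linarith
    · right; constructor <;> linarith
  refine (measure_mono_ae hsub).trans_lt ((measure_iUnion_le _).trans_lt ?_)
  rw [tsum_fintype]
  refine ENNReal.sum_lt_top.2 fun k _ => (measure_union_le _ _).trans_lt ?_
  rw [hρ.separating, hρ.separating]
  exact ENNReal.add_lt_top.2 ⟨ENNReal.ofReal_lt_top, ENNReal.ofReal_lt_top⟩

lemma sigmaFinite (hρ : IsMotionInvariant ρ) : SigmaFinite ρ := by
  refine ⟨⟨⟨fun N : ℕ => {p | |p.2| < N}, fun _ => trivial,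
    fun N => hρ.measure_bounded_lt_top N, ?_⟩⟩⟩
  refine Set.eq_univ_of_forall fun p => Set.mem_iUnion.2 ?_
  exact exists_nat_gt |p.2|

lemma isFiniteMeasure_angular (hρ : IsMotionInvariant ρ) : IsFiniteMeasure (angular ρ) := by
  have : IsFiniteMeasure (ρ.restrict (Prod.snd ⁻¹' Set.Ioc 0 1)) := by
    refine ⟨?_⟩
    rw [Measure.restrict_apply_univ]
    refine (measure_mono fun p hp => ?_).trans_lt (hρ.measure_bounded_lt_top 2)
    have hp' : 0 < p.2 ∧ p.2 ≤ 1 := hp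
    change |p.2| < 2
    exact abs_lt.2 ⟨by linarith, by linarith⟩
  exact inferInstanceAs (IsFiniteMeasure (Measure.map _ _))

variable [BorelSpace H]

lemma lintegral_inner_sq_mul (hρ : IsMotionInvariant ρ) {f : H × ℝ → ℝ≥0∞} (hf : Measurable f)
    (e : H) :
    ∫⁻ p, ENNReal.ofReal (⟪e, p.1⟫ ^ 2) * f p ∂ρ
      = ∫⁻ p, ENNReal.ofReal (⟪e, p.1⟫ ^ 2) *
          ((Set.Ioc 0 1).indicator 1 p.2 * ∫⁻ s, f (p.1, s)) ∂ρ := by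
  have := hρ.sigmaFinite
  set φ : ℝ → ℝ≥0∞ := (Set.Ioc 0 1).indicator 1 with hφ
  have hφm : Measurable φ := measurable_one.indicator measurableSet_Ioc
  have hφ1 : ∫⁻ s, φ s = 1 := by simp [hφ]
  calc ∫⁻ p, ENNReal.ofReal (⟪e, p.1⟫ ^ 2) * f p ∂ρ
      = ∫⁻ p, (∫⁻ s : ℝ, ENNReal.ofReal (⟪e, p.1⟫ ^ 2) * f p *
          (ENNReal.ofReal |⟪e, p.1⟫| * φ (p.2 - s * ⟪e, p.1⟫))) ∂ρ := by
        refine lintegral_congr fun p => ?_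
        rcases eq_or_ne ⟪e, p.1⟫ 0 with h | h
        · simp [h]
        · rw [lintegral_const_mul _ (by fun_prop)]
          have := lintegral_comp_add_mul hφm p.2 (neg_ne_zero.2 h)
          simp only [abs_neg, mul_neg, ← sub_eq_add_neg, hφ1] at this
          rw [this, mul_one]
    _ = ∫⁻ s, ∫⁻ p, ENNReal.ofReal (⟪e, p.1⟫ ^ 2) * f p *
          (ENNReal.ofReal |⟪e, p.1⟫| * φ (p.2 - s * ⟪e, p.1⟫)) ∂ρ :=
        lintegral_lintegral_swap (Measurable.aemeasurable (by fun_prop))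
    _ = ∫⁻ s, ∫⁻ p, ENNReal.ofReal (⟪e, p.1⟫ ^ 2) * φ p.2 *
          (ENNReal.ofReal |⟪e, p.1⟫| * f (p.1, p.2 + s * ⟪e, p.1⟫)) ∂ρ := by
        refine lintegral_congr fun s => ?_
        conv_lhs => rw [← hρ.map_translate (s • e)]
        rw [lintegral_map (by fun_prop) (by fun_prop)]
        refine lintegral_congr fun p => ?_
        simp only [real_inner_smul_left, add_sub_cancel_right]
        ring
    _ = ∫⁻ p, (∫⁻ s : ℝ, ENNReal.ofReal (⟪e, p.1⟫ ^ 2) * φ p.2 *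
          (ENNReal.ofReal |⟪e, p.1⟫| * f (p.1, p.2 + s * ⟪e, p.1⟫))) ∂ρ :=
        lintegral_lintegral_swap (Measurable.aemeasurable (by fun_prop))
    _ = _ := by
        refine lintegral_congr fun p => ?_
        rcases eq_or_ne ⟪e, p.1⟫ 0 with h | h
        · simp [h]
        · rw [lintegral_const_mul _ (by fun_prop),
            lintegral_comp_add_mul (g := fun s => f (p.1, s)) (by fun_prop) p.2 h, mul_assoc]

/-- Translation invariance makes the measure a product of the angular part with Lebesgue measure. -/
lemma lintegral_eq (hρ : IsMotionInvariant ρ) {f : H × ℝ → ℝ≥0∞} (hf : Measurable f) :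
    ∫⁻ p, f p ∂ρ = ∫⁻ ξ, (∫⁻ s : ℝ, f (ξ, s)) ∂(angular ρ) := by
  set e := stdOrthonormalBasis ℝ H
  have hφm : Measurable ((Set.Ioc 0 1).indicator 1 : ℝ → ℝ≥0∞) :=
    measurable_one.indicator measurableSet_Ioc
  have hfs : Measurable fun ξ : H => ∫⁻ s : ℝ, f (ξ, s) := hf.lintegral_prod_right'
  have hsum : ∀ {g : H × ℝ → ℝ≥0∞}, Measurable g →
      ∫⁻ p, g p ∂ρ = ∑ k, ∫⁻ p, ENNReal.ofReal (⟪e k, p.1⟫ ^ 2) * g p ∂ρ := by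
    intro g hg
    rw [← lintegral_finsetSum _ (fun k _ => by fun_prop)]
    refine lintegral_congr_ae ?_
    filter_upwards [hρ.norm_eq_one] with p hp
    rw [← Finset.sum_mul, ← ENNReal.ofReal_sum_of_nonneg (fun _ _ => sq_nonneg _),
      e.sum_sq_inner_right, hp]
    simp
  rw [angular, lintegral_map hfs measurable_fst,
    ← lintegral_indicator (measurable_snd measurableSet_Ioc), hsum hf,
    Finset.sum_congr rfl fun k _ => hρ.lintegral_inner_sq_mul hf (e k), ← hsum (by fun_prop)]
  refine lintegral_congr fun p => ?_
  by_cases hp : p.2 ∈ Set.Ioc (0 : ℝ) 1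
  · rw [Set.indicator_of_mem hp, Set.indicator_of_mem (by exact hp)]
    simp
  · rw [Set.indicator_of_notMem hp, Set.indicator_of_notMem (by exact hp), zero_mul]

lemma measurableSet_separating {m n : ℕ} (a : Fin m → H) (b : Fin n → H) :
    MeasurableSet {p : H × ℝ | (∀ i, p.2 ≤ ⟪a i, p.1⟫) ∧ ∀ j, ⟪b j, p.1⟫ < p.2} := by
  have h : {p : H × ℝ | (∀ i, p.2 ≤ ⟪a i, p.1⟫) ∧ ∀ j, ⟪b j, p.1⟫ < p.2}
      = (⋂ i, {p | p.2 ≤ ⟪a i, p.1⟫}) ∩ ⋂ j, {p | ⟪b j, p.1⟫ < p.2} := by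
    ext
    simp
  rw [h]
  exact (MeasurableSet.iInter fun i => measurableSet_le measurable_snd (by fun_prop)).inter
    (MeasurableSet.iInter fun j => measurableSet_lt (by fun_prop) measurable_snd)

lemma measure_separating_eq_lintegral (hρ : IsMotionInvariant ρ) {m n : ℕ}
    (a : Fin m → H) (b : Fin n → H) :
    ρ {p | (∀ i, p.2 ≤ ⟪a i, p.1⟫) ∧ ∀ j, ⟪b j, p.1⟫ < p.2}
      = ∫⁻ ξ, gapLength (fun i => ⟪a i, ξ⟫) (fun j => ⟪b j, ξ⟫) ∂(angular ρ) := by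
  have hA := measurableSet_separating a b
  rw [← lintegral_indicator_one hA, hρ.lintegral_eq (measurable_one.indicator hA)]
  refine lintegral_congr fun ξ => ?_
  exact lintegral_indicator_one (hA.preimage (measurable_prodMk_left (x := ξ)))

end IsMotionInvariant

variable [FiniteDimensional ℝ H] [BorelSpace H]

/-- The mean of the positive part of a standard Gaussian variable. -/
noncomputable def gaussianMeanPos : ℝ≥0∞ := ∫⁻ x, ENNReal.ofReal x ∂(gaussianReal 0 1)

lemma gaussianMeanPos_ne_top : gaussianMeanPos ≠ ∞ := by
  have h : Integrable (fun x : ℝ => x) (gaussianReal 0 1) := IsGaussian.integrable_id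
  refine ((lintegral_mono fun x => ?_).trans_lt h.hasFiniteIntegral).ne
  rw [← ofReal_norm]
  exact ENNReal.ofReal_le_ofReal (le_abs_self x)

lemma gaussianMeanPos_ne_zero : gaussianMeanPos ≠ 0 := by
  intro h
  rw [gaussianMeanPos, lintegral_eq_zero_iff (by fun_prop)] at h
  have h' := (gaussianReal_absolutelyContinuous' 0 one_ne_zero).ae_le h
  have h0 : volume (Set.Ioi (0 : ℝ)) = 0 := by
    refine measure_mono_null (fun x hx => ?_) (ae_iff.1 h')
    simpa using hx
  simp at h0

lemma lintegral_inner_stdGaussian {v : H} (hv : ‖v‖ = 1) :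
    ∫⁻ x, ENNReal.ofReal ⟪v, x⟫ ∂(stdGaussian H) = gaussianMeanPos := by
  have h := IsGaussian.map_eq_gaussianReal (μ := stdGaussian H) (innerSL ℝ v)
  rw [integral_strongDual_stdGaussian, variance_dual_stdGaussian, innerSL_apply_norm, hv] at h
  simp only [one_pow, Real.toNNReal_one] at h
  rw [gaussianMeanPos, ← h, lintegral_map (by fun_prop) (by fun_prop)]
  rfl

lemma gapLength_single (x y : ℝ) :
    gapLength (fun _ : Fin 1 => x) (fun _ : Fin 1 => y) = ENNReal.ofReal (x - y) := by
  rw [gapLength, ← Real.volume_Ioc]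
  congr 1
  ext s
  simp [and_comm]

open IsMotionInvariant in
lemma IsMotionInvariant.gaussianMeanPos_mul_measure [Nontrivial H] {ρ : Measure (H × ℝ)}
    (hρ : IsMotionInvariant ρ) {m n : ℕ} (hm : 1 ≤ m) (hn : 1 ≤ n)
    (a : Fin m → H) (b : Fin n → H) :
    gaussianMeanPos * ρ {p | (∀ i, p.2 ≤ ⟪a i, p.1⟫) ∧ ∀ j, ⟪b j, p.1⟫ < p.2}
      = ∫⁻ x, gapLength (fun i => ⟪a i, x⟫) (fun j => ⟪b j, x⟫) ∂(stdGaussian H) := by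
  have := hρ.isFiniteMeasure_angular
  obtain ⟨v, hv⟩ := exists_norm_eq H zero_le_one
  have key : ∀ {m n : ℕ} (_ : 1 ≤ m) (_ : 1 ≤ n) (a : Fin m → H) (b : Fin n → H),
      angular ρ Set.univ *
          ∫⁻ x, gapLength (fun i => ⟪a i, x⟫) (fun j => ⟪b j, x⟫) ∂(stdGaussian H)
        = gaussianAngular H Set.univ *
          ρ {p | (∀ i, p.2 ≤ ⟪a i, p.1⟫) ∧ ∀ j, ⟪b j, p.1⟫ < p.2} := by
    intro m n hm hn a b
    rw [hρ.measure_separating_eq_lintegral]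
    exact mul_lintegral_stdGaussian hρ.angular_map hρ.norm_eq_one_angular
      (measurable_gapLength_inner a b) (gapLength_inner_eq_norm_mul hm hn a b)
  have hone : ρ {p | (∀ _ : Fin 1, p.2 ≤ ⟪v, p.1⟫) ∧ ∀ _ : Fin 1, ⟪(0 : H), p.1⟫ < p.2} = 1 := by
    simpa [hv] using hρ.separating v 0
  have hnorm := key le_rfl le_rfl (fun _ : Fin 1 => v) (fun _ : Fin 1 => 0)
  rw [hone, mul_one] at hnorm
  simp only [gapLength_single, inner_zero_left, sub_zero] at hnorm
  rw [lintegral_inner_stdGaussian hv] at hnorm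
  have hne : angular ρ Set.univ ≠ 0 := by
    intro h
    rw [hρ.measure_separating_eq_lintegral, Measure.measure_univ_eq_zero.1 h,
      lintegral_zero_measure] at hone
    exact zero_ne_one hone
  have hab := key hm hn a b
  rw [← hnorm, mul_assoc] at hab
  exact ((ENNReal.mul_right_inj hne (measure_ne_top _ _)).1 hab).symm

end MotionInvariant

namespace HalfSpaces

section Coordinates

variable {H : Type*} [NormedAddCommGroup H] [InnerProductSpace ℝ H]

/-- The coordinates `(ξ, t)` of the half-space `{u | t ≤ ⟪u, ξ⟫}`. -/
noncomputable def coord (M : HalfSpaces H) : H × ℝ :=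
  (M.2.choose, M.2.choose_spec.choose)

lemma norm_coord (M : HalfSpaces H) : ‖M.coord.1‖ = 1 :=
  M.2.choose_spec.choose_spec.1

lemma val_eq (M : HalfSpaces H) : M.1 = {u | M.coord.2 ≤ ⟪u, M.coord.1⟫} :=
  M.2.choose_spec.choose_spec.2

lemma mem_iff (M : HalfSpaces H) (u : H) : u ∈ M.1 ↔ M.coord.2 ≤ ⟪M.coord.1, u⟫ := by
  conv_lhs => rw [M.val_eq]
  rw [real_inner_comm]
  rfl

/-- The half-space `{u | t ≤ ⟪u, ξ⟫}`. -/
def ofCoord (p : {p : H × ℝ // ‖p.1‖ = 1}) : HalfSpaces H :=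
  ⟨{u | p.1.2 ≤ ⟪u, p.1.1⟫}, p.1.1, p.1.2, p.2, rfl⟩

lemma ofCoord_coord (M : HalfSpaces H) : ofCoord ⟨M.coord, M.norm_coord⟩ = M :=
  Subtype.ext M.val_eq.symm

lemma coord_unique {ξ η : H} {s t : ℝ} (hξ : ‖ξ‖ = 1) (hη : ‖η‖ = 1)
    (h : ∀ u, s ≤ ⟪u, ξ⟫ ↔ t ≤ ⟪u, η⟫) : (ξ, s) = (η, t) := by
  have hξ2 : ⟪ξ, ξ⟫ = 1 := by simp [hξ]
  have hη2 : ⟪η, η⟫ = 1 := by simp [hη]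
  set c := ⟪ξ, η⟫ with hc
  have hc' : ⟪η, ξ⟫ = c := by rw [real_inner_comm]
  have hcle : c ≤ 1 := by
    have := real_inner_le_norm ξ η
    rwa [hξ, hη, one_mul] at this
  have hline : ∀ r q : ℝ, s ≤ q → t ≤ q * c + r * (c ^ 2 - 1) := by
    intro r q hq
    have := (h (q • ξ + r • (c • ξ - η))).1 (by
      simp only [inner_add_left, inner_sub_left, real_inner_smul_left, hξ2, hc']
      linarith)
    simp only [inner_add_left, inner_sub_left, real_inner_smul_left, hη2, ← hc] at this
    linarith
  have hc1 : 1 ≤ c ^ 2 := by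
    by_contra! hlt
    have := hline ((s * c - t + 1) / (1 - c ^ 2)) s le_rfl
    have e : (s * c - t + 1) / (1 - c ^ 2) * (c ^ 2 - 1) = -(s * c - t + 1) := by
      have : 1 - c ^ 2 ≠ 0 := by linarith
      field_simp
      ring
    linarith
  have hcpos : 0 < c := by
    by_contra! hneg
    have hcm : c ≤ -1 := by nlinarith
    have := hline 0 (max s (max 0 (1 - t))) (le_max_left _ _)
    have h1 : 0 ≤ max s (max 0 (1 - t)) := (le_max_left _ _).trans (le_max_right _ _)
    have h2 : 1 - t ≤ max s (max 0 (1 - t)) := (le_max_right _ _).trans (le_max_right _ _)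
    nlinarith
  have hcone : c = 1 := le_antisymm hcle (by nlinarith)
  obtain rfl : ξ = η := (inner_eq_one_iff_of_norm_eq_one (𝕜 := ℝ) hξ hη).1 hcone
  have h1 := (h (s • ξ)).1 (by simp [real_inner_smul_left, hξ])
  have h2 := (h (t • ξ)).2 (by simp [real_inner_smul_left, hξ])
  simp only [real_inner_smul_left, hξ2, mul_one] at h1 h2
  rw [le_antisymm h2 h1]

lemma coord_ofCoord (p : {p : H × ℝ // ‖p.1‖ = 1}) : (ofCoord p).coord = p.1 := by
  refine coord_unique (norm_coord _) p.2 fun u => ?_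
  have : u ∈ (ofCoord p).1 ↔ p.1.2 ≤ ⟪u, p.1.1⟫ := Iff.rfl
  rw [← this, mem_iff, real_inner_comm]
  rfl

/-- Half-spaces containing the same points of a dense set are equal. -/
lemma eq_of_dense {D : Set H} (hD : Dense D) {M N : HalfSpaces H}
    (h : ∀ u ∈ D, u ∈ M.1 ↔ u ∈ N.1) : M = N := by
  have key : ∀ M N : HalfSpaces H, (∀ u ∈ D, u ∈ M.1 → u ∈ N.1) → M.1 ⊆ N.1 := by
    intro M N h u hu
    rw [mem_iff] at hu ⊢
    have hopen : IsOpen {w : H | M.coord.2 < ⟪M.coord.1, w⟫} :=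
      isOpen_lt continuous_const (by fun_prop)
    have hclosed : IsClosed {w : H | N.coord.2 ≤ ⟪N.coord.1, w⟫} :=
      isClosed_le continuous_const (by fun_prop)
    have hsub : {w : H | M.coord.2 < ⟪M.coord.1, w⟫} ⊆ {w : H | N.coord.2 ≤ ⟪N.coord.1, w⟫} := by
      refine (hD.open_subset_closure_inter hopen).trans (closure_minimal ?_ hclosed)
      rintro w ⟨hw, hwD⟩
      exact (N.mem_iff w).1 (h w hwD ((M.mem_iff w).2 (le_of_lt hw)))
    refine le_of_forall_pos_le_add fun ε hε => ?_
    have hmem : u + ε • M.coord.1 ∈ {w : H | M.coord.2 < ⟪M.coord.1, w⟫} := by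
      simp only [Set.mem_ofPred_eq, inner_add_right, real_inner_smul_right,
        real_inner_self_eq_norm_sq, M.norm_coord]
      linarith
    have hN : N.coord.2 ≤ ⟪N.coord.1, u + ε • M.coord.1⟫ := hsub hmem
    rw [inner_add_right, real_inner_smul_right] at hN
    have hle := real_inner_le_norm N.coord.1 M.coord.1
    rw [N.norm_coord, M.norm_coord, one_mul] at hle
    nlinarith
  exact Subtype.ext ((key M N fun u hu => (h u hu).1).antisymm (key N M fun u hu => (h u hu).2))

end Coordinates

variable {H : Type*} [NormedAddCommGroup H] [InnerProductSpace ℝ H] [FiniteDimensional ℝ H]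
  [MeasurableSpace H] [BorelSpace H] [mΩ : MeasurableSpace (HalfSpaces H)]

lemma measurable_coord
    (hm : mΩ = MeasurableSpace.generateFrom {A | ∃ v : H, A = {M : HalfSpaces H | v ∈ M.1}}) :
    Measurable (coord : HalfSpaces H → H × ℝ) := by
  have hpt : ∀ v : H, MeasurableSet {M : HalfSpaces H | v ∈ M.1} := by
    intro v
    rw [hm]
    exact MeasurableSpace.measurableSet_generateFrom ⟨v, rfl⟩
  have hsep : MeasurableSpace.CountablySeparated (HalfSpaces H) := by
    obtain ⟨D, hDc, hD⟩ := TopologicalSpace.exists_countable_dense H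
    refine ⟨⟨(fun v : H => {M : HalfSpaces H | v ∈ M.1}) '' D, hDc.image _, ?_, ?_⟩⟩
    · rintro _ ⟨v, _, rfl⟩
      exact hpt v
    · intro M _ N _ h
      exact eq_of_dense hD fun u hu => h _ ⟨u, hu, rfl⟩
  have hsphere : MeasurableSet {p : H × ℝ | ‖p.1‖ = 1} :=
    measurableSet_eq_fun (by fun_prop) measurable_const
  have hstd : StandardBorelSpace {p : H × ℝ // ‖p.1‖ = 1} := hsphere.standardBorel
  have hmeas : Measurable (ofCoord : {p : H × ℝ // ‖p.1‖ = 1} → HalfSpaces H) := by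
    subst hm
    refine measurable_generateFrom ?_
    rintro _ ⟨v, rfl⟩
    exact measurableSet_le (f := fun p : {p : H × ℝ // ‖p.1‖ = 1} => p.1.2)
      (g := fun p => ⟪v, p.1.1⟫) (by fun_prop) (by fun_prop)
  have hinj : Function.Injective (ofCoord : {p : H × ℝ // ‖p.1‖ = 1} → HalfSpaces H) := by
    intro p q h
    exact Subtype.ext (by rw [← coord_ofCoord p, h, coord_ofCoord])
  have hemb := hmeas.measurableEmbedding hinj
  intro B hB
  have heq : coord ⁻¹' B
      = ofCoord '' (Subtype.val ⁻¹' B : Set {p : H × ℝ // ‖p.1‖ = 1}) := by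
    ext M
    constructor
    · intro hM
      exact ⟨⟨M.coord, M.norm_coord⟩, hM, ofCoord_coord M⟩
    · rintro ⟨p, hp, rfl⟩
      change (ofCoord p).coord ∈ B
      rw [coord_ofCoord]
      exact hp
  rw [heq]
  exact hemb.measurableSet_image.2 (measurable_subtype_coe hB)

lemma map_map_coord {μ : Measure (HalfSpaces H)} (hμ : IsHalfSpaceMeasure H μ)
    (φ : H ≃ᵢ H) {T : H × ℝ → H × ℝ} (hT : Measurable T)
    (hnorm : ∀ p, ‖p.1‖ = 1 → ‖(T p).1‖ = 1)
    (hφ : ∀ p u, (T p).2 ≤ ⟪φ u, (T p).1⟫ ↔ p.2 ≤ ⟪u, p.1⟫) :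
    (μ.map coord).map T = μ.map coord := by
  have hc := measurable_coord hμ.1
  ext B hB
  rw [Measure.map_apply hT hB, Measure.map_apply hc (hT hB), Measure.map_apply hc hB,
    ← hμ.2.1 φ _ (hc hB)]
  congr 1
  ext M
  set q : {p : H × ℝ // ‖p.1‖ = 1} := ⟨T M.coord, hnorm _ M.norm_coord⟩
  have himg : φ '' M.1 = (ofCoord q).1 := by
    ext u
    obtain ⟨w, rfl⟩ := φ.surjective u
    rw [φ.injective.mem_set_image, M.mem_iff, real_inner_comm, ← hφ]
    rfl
  constructor
  · intro hM
    refine ⟨ofCoord q, ?_, himg.symm⟩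
    change (ofCoord q).coord ∈ B
    rw [coord_ofCoord]
    exact hM
  · rintro ⟨N, hN, hNφ⟩
    have : N = ofCoord q := Subtype.ext (hNφ.trans himg)
    subst this
    change (ofCoord q).coord ∈ B at hN
    rw [coord_ofCoord] at hN
    exact hN

lemma map_coord_separating {μ : Measure (HalfSpaces H)} (hμ : IsHalfSpaceMeasure H μ) {m n : ℕ}
    (a : Fin m → H) (b : Fin n → H) :
    μ.map coord {p | (∀ i, p.2 ≤ ⟪a i, p.1⟫) ∧ ∀ j, ⟪b j, p.1⟫ < p.2}
      = μ {M : HalfSpaces H | (∀ i, a i ∈ M.1) ∧ ∀ j, b j ∉ M.1} := by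
  rw [Measure.map_apply (measurable_coord hμ.1)
    (IsMotionInvariant.measurableSet_separating a b)]
  congr 1
  ext M
  simp [mem_iff, real_inner_comm]

lemma isMotionInvariant_map_coord {μ : Measure (HalfSpaces H)} (hμ : IsHalfSpaceMeasure H μ) :
    IsMotionInvariant (μ.map coord) where
  norm_eq_one := by
    rw [ae_map_iff (measurable_coord hμ.1).aemeasurable
      (measurableSet_eq_fun (by fun_prop) measurable_const)]
    exact .of_forall norm_coord
  map_translate x := by
    refine map_map_coord hμ (IsometryEquiv.addRight x) (by fun_prop) (fun p hp => hp)
      fun p u => ?_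
    simp [inner_add_left]
  map_rotate R := by
    refine map_map_coord hμ R.toIsometryEquiv
      ((R.continuous.measurable.comp measurable_fst).prodMk measurable_snd)
      (fun p hp => by simpa using hp) fun p u => ?_
    simp
  separating v w := by
    have h := map_coord_separating hμ (fun _ : Fin 1 => v) (fun _ : Fin 1 => w)
    simp only [forall_const] at h
    rw [h, hμ.2.2]

end HalfSpaces

/-- The Gaussian mean of the gap length depends only on the mutual distances of the points. -/
lemma lintegral_gapLength_eq_of_norm_sub_eq
    {H : Type*} [NormedAddCommGroup H] [InnerProductSpace ℝ H] [FiniteDimensional ℝ H]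
    [MeasurableSpace H] [BorelSpace H]
    {H' : Type*} [NormedAddCommGroup H'] [InnerProductSpace ℝ H'] [FiniteDimensional ℝ H']
    [MeasurableSpace H'] [BorelSpace H'] {m n : ℕ} (hn : 1 ≤ n)
    (a : Fin m → H) (b : Fin n → H) (a' : Fin m → H') (b' : Fin n → H')
    (hconf : ∀ p q : Fin m ⊕ Fin n,
      ‖Sum.elim a b p - Sum.elim a b q‖ = ‖Sum.elim a' b' p - Sum.elim a' b' q‖) :
    ∫⁻ x, gapLength (fun i => ⟪a i, x⟫) (fun j => ⟪b j, x⟫) ∂(stdGaussian H)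
      = ∫⁻ x, gapLength (fun i => ⟪a' i, x⟫) (fun j => ⟪b' j, x⟫) ∂(stdGaussian H') := by
  set o : Fin m ⊕ Fin n := Sum.inr ⟨0, hn⟩
  set u : Fin m ⊕ Fin n → H := fun p => Sum.elim a b p - Sum.elim a b o with hu
  set u' : Fin m ⊕ Fin n → H' := fun p => Sum.elim a' b' p - Sum.elim a' b' o with hu'
  have hgram : ∀ p q, ⟪u p, u q⟫ = ⟪u' p, u' q⟫ := by
    intro p q
    rw [real_inner_eq_norm_mul_self_add_norm_mul_self_sub_norm_sub_mul_self_div_two,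
      real_inner_eq_norm_mul_self_add_norm_mul_self_sub_norm_sub_mul_self_div_two]
    simp only [hu, hu', sub_sub_sub_cancel_right, hconf]
  set Φ : EuclideanSpace ℝ (Fin m ⊕ Fin n) → ℝ≥0∞ :=
    fun z => gapLength (fun i => z (Sum.inl i)) (fun j => z (Sum.inr j))
  have hΦ : Measurable Φ := measurable_gapLength.comp
    (f := fun z : EuclideanSpace ℝ (Fin m ⊕ Fin n) =>
      (fun i => z (Sum.inl i), fun j => z (Sum.inr j))) (by fun_prop)
  have h := congrArg (fun ν => ∫⁻ z, Φ z ∂ν) (stdGaussian_map_inner_eq u u' hgram)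
  simp only at h
  rw [lintegral_map hΦ (by fun_prop), lintegral_map hΦ (by fun_prop)] at h
  simp only [Φ, hu, hu', inner_sub_left, Sum.elim_inl, Sum.elim_inr, gapLength_sub_const] at h
  exact h

/-- The measure of `{M : all v_{x_i} ∈ M, all v_{y_j} ∉ M}` depends only on
the configuration (pairwise distances) of the points; in particular it is independent of
the ambient space and preserved under affine isometries. -/
theorem halfspace_measure_depends_only_on_configuration
    (H : Type*) [NormedAddCommGroup H] [InnerProductSpace ℝ H] [FiniteDimensional ℝ H]
    (H' : Type*) [NormedAddCommGroup H'] [InnerProductSpace ℝ H'] [FiniteDimensional ℝ H']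
    [MeasurableSpace (HalfSpaces H)] [MeasurableSpace (HalfSpaces H')]
    (μ : Measure (HalfSpaces H)) (μ' : Measure (HalfSpaces H'))
    (hμ : IsHalfSpaceMeasure H μ) (hμ' : IsHalfSpaceMeasure H' μ')
    {mm nn : ℕ} (hm : 1 ≤ mm) (hn : 1 ≤ nn)
    (a : Fin mm → H) (b : Fin nn → H) (a' : Fin mm → H') (b' : Fin nn → H')
    (hconf : ∀ p q : Fin mm ⊕ Fin nn,
      ‖Sum.elim a b p - Sum.elim a b q‖ = ‖Sum.elim a' b' p - Sum.elim a' b' q‖) :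
    μ {M : HalfSpaces H | (∀ i, a i ∈ M.1) ∧ ∀ j, b j ∉ M.1}
      = μ' {M : HalfSpaces H' | (∀ i, a' i ∈ M.1) ∧ ∀ j, b' j ∉ M.1} := by
  by_cases hab : a ⟨0, hm⟩ = b ⟨0, hn⟩
  · have hab' : a' ⟨0, hm⟩ = b' ⟨0, hn⟩ := by
      have h := hconf (Sum.inl ⟨0, hm⟩) (Sum.inr ⟨0, hn⟩)
      simp only [Sum.elim_inl, Sum.elim_inr, hab, sub_self, norm_zero] at h
      exact sub_eq_zero.1 (norm_eq_zero.1 h.symm)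
    have h1 : {M : HalfSpaces H | (∀ i, a i ∈ M.1) ∧ ∀ j, b j ∉ M.1} = ∅ :=
      Set.eq_empty_of_forall_notMem fun M hM => hM.2 ⟨0, hn⟩ (hab ▸ hM.1 ⟨0, hm⟩)
    have h2 : {M : HalfSpaces H' | (∀ i, a' i ∈ M.1) ∧ ∀ j, b' j ∉ M.1} = ∅ :=
      Set.eq_empty_of_forall_notMem fun M hM => hM.2 ⟨0, hn⟩ (hab' ▸ hM.1 ⟨0, hm⟩)
    rw [h1, h2, measure_empty, measure_empty]
  · have hab' : a' ⟨0, hm⟩ ≠ b' ⟨0, hn⟩ := by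
      intro hab'
      have h := hconf (Sum.inl ⟨0, hm⟩) (Sum.inr ⟨0, hn⟩)
      simp only [Sum.elim_inl, Sum.elim_inr, hab', sub_self, norm_zero] at h
      exact hab (sub_eq_zero.1 (norm_eq_zero.1 h))
    have : Nontrivial H := ⟨_, _, hab⟩
    have : Nontrivial H' := ⟨_, _, hab'⟩
    borelize H
    borelize H'
    rw [← HalfSpaces.map_coord_separating hμ, ← HalfSpaces.map_coord_separating hμ',
      ← ENNReal.mul_right_inj gaussianMeanPos_ne_zero gaussianMeanPos_ne_top,
      (HalfSpaces.isMotionInvariant_map_coord hμ).gaussianMeanPos_mul_measure hm hn,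
      (HalfSpaces.isMotionInvariant_map_coord hμ').gaussianMeanPos_mul_measure hm hn]
    exact lintegral_gapLength_eq_of_norm_sub_eq hn a b a' b' hconf
end
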